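/- Barrier lemma in the unit ball. For every integer n ≥ 2, reals 0 < λ ≤ Λ, exponent q > n, and K > 0, there exists a constant c₀ > 0 such that the following holds. Let b : B₁ → ℝ be continuous with b ≥ 0 and ‖b‖_{L^q(B₁)} ≤ K, and let v be continuous on the closed ball cl(B₁) and C² on B₁, with 𝓜⁻(D²v(x)) − b(x)|Dv(x)| = −1 for all x ∈ B₁ and v = 0 on ∂B₁. Then v(x) ≥ c₀·(1−|x|) for all x ∈ B₁. -/

import Mathlib

open MeasureTheory
open scoped ENNReal

/-- The Pucci minimal extremal operator `𝓜⁻(M)` with ellipticity constants `lam ≤ Lam`: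
the infimum of `tr(A*M)` over symmetric matrices `A` with `lam•I ≤ A ≤ Lam•I`. -/
noncomputable def pucciMinus (n : ℕ) (lam Lam : ℝ) (M : Matrix (Fin n) (Fin n) ℝ) : ℝ :=
  sInf { t : ℝ | ∃ A : Matrix (Fin n) (Fin n) ℝ, A.IsSymm ∧
    (A - lam • (1 : Matrix (Fin n) (Fin n) ℝ)).PosSemidef ∧
    (Lam • (1 : Matrix (Fin n) (Fin n) ℝ) - A).PosSemidef ∧ t = (A * M).trace }

/-- The Pucci maximal extremal operator `𝓜⁺(M)`. -/
noncomputable def pucciPlus (n : ℕ) (lam Lam : ℝ) (M : Matrix (Fin n) (Fin n) ℝ) : ℝ :=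
  sSup { t : ℝ | ∃ A : Matrix (Fin n) (Fin n) ℝ, A.IsSymm ∧
    (A - lam • (1 : Matrix (Fin n) (Fin n) ℝ)).PosSemidef ∧
    (Lam • (1 : Matrix (Fin n) (Fin n) ℝ) - A).PosSemidef ∧ t = (A * M).trace }

/-- The Hessian matrix `D²u(x)` of `u` at `x`. -/
noncomputable def hess (n : ℕ) (u : EuclideanSpace ℝ (Fin n) → ℝ)
    (x : EuclideanSpace ℝ (Fin n)) : Matrix (Fin n) (Fin n) ℝ :=
  fun i j => fderiv ℝ (fun y => fderiv ℝ u y (EuclideanSpace.single j (1 : ℝ))) x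
    (EuclideanSpace.single i (1 : ℝ))

/-- The euclidean norm `|Du(x)|` of the gradient of `u` at `x`. -/
noncomputable def gradNorm (n : ℕ) (u : EuclideanSpace ℝ (Fin n) → ℝ)
    (x : EuclideanSpace ℝ (Fin n)) : ℝ := ‖fderiv ℝ u x‖

/-- The `L^p` norm `(∫_E |g|^p)^(1/p)`, as a Lebesgue integral valued in `[0,∞]`. -/
noncomputable def LpNormE (n : ℕ) (p : ℝ) (g : EuclideanSpace ℝ (Fin n) → ℝ)
    (E : Set (EuclideanSpace ℝ (Fin n))) : ℝ≥0∞ :=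
  (∫⁻ x in E, ENNReal.ofReal (|g x| ^ p)) ^ (1 / p)

/-- The last (`n`-th) coordinate `x_n` of a point of `ℝⁿ`. -/
def lastC (n : ℕ) (hn : 1 ≤ n) (x : EuclideanSpace ℝ (Fin n)) : ℝ := x ⟨n - 1, by omega⟩

/-- The open half-ball `B_R⁺ = {|x| < R, x_n > 0}`. -/
def halfBall (n : ℕ) (hn : 1 ≤ n) (R : ℝ) : Set (EuclideanSpace ℝ (Fin n)) :=
  {x | ‖x‖ < R ∧ 0 < lastC n hn x}

/-- The flat boundary part `B_R⁰ = {|x| ≤ R, x_n = 0}`. -/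
def flatB (n : ℕ) (hn : 1 ≤ n) (R : ℝ) : Set (EuclideanSpace ℝ (Fin n)) :=
  {x | ‖x‖ ≤ R ∧ lastC n hn x = 0}

/-- The norm `‖g‖_{L^{p,q}(B_R⁺)} = ‖g‖_{L^p(B_R⁺)} + ‖g‖_{L^q(B_R⁺ ∩ {x_n < d0})}`. -/
noncomputable def LpqNormHB (n : ℕ) (hn : 1 ≤ n) (p q d0 R : ℝ)
    (g : EuclideanSpace ℝ (Fin n) → ℝ) : ℝ≥0∞ :=
  LpNormE n p g (halfBall n hn R) +
    LpNormE n q g {x ∈ halfBall n hn R | lastC n hn x < d0}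

/-- The open cube `Q_ρ` of side `ρ` centered at `(0,…,0,ρ/2)`. -/
def cubeQ (n : ℕ) (hn : 1 ≤ n) (ρ : ℝ) : Set (EuclideanSpace ℝ (Fin n)) :=
  {x | (∀ i : Fin n, i.1 ≠ n - 1 → |x i| < ρ / 2) ∧ 0 < lastC n hn x ∧ lastC n hn x < ρ}

/-- The norm `‖g‖_{L^{p,q}(Q₂)} = ‖g‖_{L^p(Q₂)} + ‖g‖_{L^q(Q₂ ∩ {x_n < d0})}`. -/
noncomputable def LpqNormQ (n : ℕ) (hn : 1 ≤ n) (p q d0 : ℝ)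
    (g : EuclideanSpace ℝ (Fin n) → ℝ) : ℝ≥0∞ :=
  LpNormE n p g (cubeQ n hn 2) +
    LpNormE n q g {x ∈ cubeQ n hn 2 | lastC n hn x < d0}

/-!
The Alexandrov-Bakelman-Pucci estimate on a domain of diameter comparable to `R` bounds the effect
of the drift on a comparison with a test function of slope `L` by a multiple of `L R R ^ (1 - n/q)`.
Since `q > n`, the drift is a lower-order perturbation at small scales. Comparing `v` with a barrier
on the collar of width `2s`, localized at a scale `R` slightly larger than `s`, shows that
the minimum of `v` over the sphere at distance `s` from the boundary is at least `1/2 - O(s ^ g)`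
times its minimum over the sphere at distance `2s`, where `g = (1 - n/q)/2`. The losses are
summable along `s = r, r/2, r/4, …`: the corrected linear profile `s (1 + P s ^ g)` absorbs them.
-/

open Filter
open scoped Gradient NNReal Topology

section Matrix

open scoped MatrixOrder

variable {ι : Type*} {A N : Matrix ι ι ℝ}

lemma trace_mul_nonneg_of_posSemidef [Fintype ι] (hA : A.PosSemidef) (hN : N.PosSemidef) :
    0 ≤ (A * N).trace := by
  classical
  have hsqrt : (CFC.sqrt N).PosSemidef := Matrix.nonneg_iff_posSemidef.mp (CFC.sqrt_nonneg N)
  have htrace := (hA.mul_mul_conjTranspose_same (CFC.sqrt N)).trace_nonneg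
  rwa [hsqrt.isHermitian.eq, Matrix.mul_assoc, Matrix.trace_mul_comm, Matrix.mul_assoc,
    CFC.sqrt_mul_sqrt_self N hN.nonneg] at htrace

lemma det_le_trace_pow_of_posSemidef [Fintype ι] [DecidableEq ι] (hN : N.PosSemidef) :
    N.det ≤ N.trace ^ Fintype.card ι := by
  have hnonneg := hN.eigenvalues_nonneg
  rw [hN.isHermitian.det_eq_prod_eigenvalues, hN.isHermitian.trace_eq_sum_eigenvalues]
  calc ∏ i, hN.isHermitian.eigenvalues i
      ≤ ∏ _i : ι, ∑ j, hN.isHermitian.eigenvalues j :=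
        Finset.prod_le_prod (fun i _ => hnonneg i)
          (fun i _ => Finset.single_le_sum (fun j _ => hnonneg j) (Finset.mem_univ i))
    _ = (∑ j, hN.isHermitian.eigenvalues j) ^ Fintype.card ι := by simp

lemma exists_posSemidef_sub_smul_one [Finite ι] [DecidableEq ι] (hN : N.IsHermitian) :
    ∃ c : ℝ, (N - c • (1 : Matrix ι ι ℝ)).PosSemidef := by
  have := Fintype.ofFinite ι
  obtain ⟨c, hc⟩ := (Matrix.finite_real_spectrum (A := N)).bddBelow
  refine ⟨c, ?_⟩
  rw [← Matrix.le_iff, ← Algebra.algebraMap_eq_smul_one]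
  exact (algebraMap_le_iff_le_spectrum (ha := hN)).mpr fun x hx => hc hx

lemma isClosed_setOf_posSemidef [Finite ι] : IsClosed {M : Matrix ι ι ℝ | M.PosSemidef} := by
  have := Fintype.ofFinite ι
  simp only [Matrix.posSemidef_iff_dotProduct_mulVec, Set.ofPred_and, Set.ofPred_forall]
  refine (isClosed_eq (by fun_prop) continuous_id).inter (isClosed_iInter fun a => ?_)
  exact isClosed_le continuous_const (by fun_prop)

end Matrix

section Pucci

variable {n : ℕ} {lam Lam : ℝ} {A M N : Matrix (Fin n) (Fin n) ℝ}

/-- The symmetric matrices `A` with `lam•I ≤ A ≤ Lam•I`, over which the Pucci operators optimize. -/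
def ellipticMatrices (n : ℕ) (lam Lam : ℝ) : Set (Matrix (Fin n) (Fin n) ℝ) :=
  {A | A.IsSymm ∧ (A - lam • (1 : Matrix (Fin n) (Fin n) ℝ)).PosSemidef ∧
    (Lam • (1 : Matrix (Fin n) (Fin n) ℝ) - A).PosSemidef}

lemma smul_one_mem_ellipticMatrices (hLam : lam ≤ Lam) :
    lam • (1 : Matrix (Fin n) (Fin n) ℝ) ∈ ellipticMatrices n lam Lam := by
  refine ⟨by simp [Matrix.IsSymm], by simpa using Matrix.PosSemidef.zero, ?_⟩
  rw [← sub_smul]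
  exact Matrix.PosSemidef.one.smul (sub_nonneg.mpr hLam)

lemma mul_trace_le_trace_mul (hA : A ∈ ellipticMatrices n lam Lam) (hN : N.PosSemidef) :
    lam * N.trace ≤ (A * N).trace := by
  have := trace_mul_nonneg_of_posSemidef hA.2.1 hN
  rwa [Matrix.sub_mul, Matrix.trace_sub, Matrix.smul_mul, Matrix.one_mul, Matrix.trace_smul,
    smul_eq_mul, sub_nonneg] at this

lemma mul_le_trace_of_mem_ellipticMatrices (hA : A ∈ ellipticMatrices n lam Lam) :
    n * lam ≤ A.trace := by
  simpa [mul_comm lam] using mul_trace_le_trace_mul hA Matrix.PosSemidef.one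

lemma trace_le_mul_of_mem_ellipticMatrices (hA : A ∈ ellipticMatrices n lam Lam) :
    A.trace ≤ n * Lam := by
  simpa [Matrix.trace_sub, Matrix.trace_smul, mul_comm Lam] using hA.2.2.trace_nonneg

lemma bddBelow_trace_mul_ellipticMatrices (hM : M.IsHermitian) :
    BddBelow ((fun A => (A * M).trace) '' ellipticMatrices n lam Lam) := by
  obtain ⟨c, hc⟩ := exists_posSemidef_sub_smul_one hM
  refine ⟨lam * (M - c • 1).trace + min (c * (n * lam)) (c * (n * Lam)), ?_⟩
  rintro _ ⟨A, hA, rfl⟩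
  have hsplit : (A * M).trace = (A * (M - c • 1)).trace + c * A.trace := by
    simp [Matrix.mul_sub, Matrix.trace_sub, Matrix.trace_smul]
  have hlower := mul_le_trace_of_mem_ellipticMatrices hA
  have hupper := trace_le_mul_of_mem_ellipticMatrices hA
  have hmin : min (c * (n * lam)) (c * (n * Lam)) ≤ c * A.trace := by
    rcases le_total 0 c with hc0 | hc0
    · exact (min_le_left _ _).trans (mul_le_mul_of_nonneg_left hlower hc0)
    · exact (min_le_right _ _).trans (mul_le_mul_of_nonpos_left hupper hc0)
  simp only [hsplit]
  exact add_le_add (mul_trace_le_trace_mul hA hc) hmin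

lemma pucciMinus_eq_sInf_image (n : ℕ) (lam Lam : ℝ) (M : Matrix (Fin n) (Fin n) ℝ) :
    pucciMinus n lam Lam M = sInf ((fun A => (A * M).trace) '' ellipticMatrices n lam Lam) := by
  simp only [pucciMinus, ellipticMatrices, Set.image, Set.mem_ofPred_eq, and_assoc, eq_comm]

lemma pucciMinus_le_trace_mul (hM : M.IsHermitian) (hA : A ∈ ellipticMatrices n lam Lam) :
    pucciMinus n lam Lam M ≤ (A * M).trace := by
  rw [pucciMinus_eq_sInf_image]
  exact csInf_le (bddBelow_trace_mul_ellipticMatrices hM) (Set.mem_image_of_mem _ hA)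

lemma le_pucciMinus {t : ℝ} (hLam : lam ≤ Lam)
    (h : ∀ A ∈ ellipticMatrices n lam Lam, t ≤ (A * M).trace) : t ≤ pucciMinus n lam Lam M := by
  rw [pucciMinus_eq_sInf_image]
  exact le_csInf (Set.Nonempty.image _ ⟨_, smul_one_mem_ellipticMatrices hLam⟩)
    (Set.forall_mem_image.mpr h)

lemma mul_trace_le_pucciMinus (hLam : lam ≤ Lam) (hN : N.PosSemidef) :
    lam * N.trace ≤ pucciMinus n lam Lam N :=
  le_pucciMinus hLam fun _ hA => mul_trace_le_trace_mul hA hN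

lemma pucciMinus_add_le (hLam : lam ≤ Lam) (hM : M.IsHermitian) (hN : N.IsHermitian) :
    pucciMinus n lam Lam M + pucciMinus n lam Lam N ≤ pucciMinus n lam Lam (M + N) := by
  refine le_pucciMinus hLam fun A hA => ?_
  rw [Matrix.mul_add, Matrix.trace_add]
  exact add_le_add (pucciMinus_le_trace_mul hM hA) (pucciMinus_le_trace_mul hN hA)

lemma neg_mul_le_pucciMinus_neg_smul_one (hLam : lam ≤ Lam) {c : ℝ} (hc : 0 ≤ c) :
    -(c * (n * Lam)) ≤ pucciMinus n lam Lam (-(c • (1 : Matrix (Fin n) (Fin n) ℝ))) := by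
  refine le_pucciMinus hLam fun A hA => ?_
  rw [Matrix.mul_neg, Matrix.trace_neg, Matrix.mul_smul, Matrix.mul_one, Matrix.trace_smul,
    smul_eq_mul]
  exact neg_le_neg (mul_le_mul_of_nonneg_left (trace_le_mul_of_mem_ellipticMatrices hA) hc)

end Pucci

section SecondDerivative

lemma deriv_deriv_nonneg_of_isLocalMin {f : ℝ → ℝ} {t : ℝ} (hmin : IsLocalMin f t)
    (hf : ContinuousAt f t) : 0 ≤ deriv (deriv f) t := by
  by_contra! hneg
  have hmax : IsLocalMax f t := isLocalMax_of_deriv_deriv_neg hneg hmin.deriv_eq_zero hf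
  have hconst : f =ᶠ[𝓝 t] fun _ => f t := by
    filter_upwards [hmin, hmax] with s h₁ h₂ using le_antisymm h₂ h₁
  have hzero : deriv (deriv f) t = 0 := by simp [hconst.deriv.deriv_eq]
  exact hneg.ne hzero

variable {E : Type*} [NormedAddCommGroup E] [NormedSpace ℝ E] {u : E → ℝ} {x : E}

lemma deriv_deriv_comp_add_smul (hu : ContDiffAt ℝ 2 u x) (a : E) :
    deriv (deriv fun t : ℝ => u (x + t • a)) 0 = fderiv ℝ (fderiv ℝ u) x a a := by
  have hline (t : ℝ) : HasDerivAt (fun t : ℝ => x + t • a) a t := by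
    simpa using ((hasDerivAt_id t).smul_const a).const_add x
  have htendsto : Tendsto (fun t : ℝ => x + t • a) (𝓝 0) (𝓝 x) := by
    simpa using (hline 0).continuousAt.tendsto
  have hdiff : ∀ᶠ y in 𝓝 x, DifferentiableAt ℝ u y :=
    (hu.eventually (by simp)).mono fun y hy => hy.differentiableAt two_ne_zero
  have hfirst : (deriv fun t : ℝ => u (x + t • a)) =ᶠ[𝓝 0] fun t => fderiv ℝ u (x + t • a) a :=
    (htendsto.eventually hdiff).mono fun t ht =>
      (ht.hasFDerivAt.comp_hasDerivAt t (hline t)).deriv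
  have hsecond : HasFDerivAt (fderiv ℝ u) (fderiv ℝ (fderiv ℝ u) x) (x + (0 : ℝ) • a) := by
    simpa using ((hu.fderiv_right (m := 1) le_rfl).differentiableAt one_ne_zero).hasFDerivAt
  have hderiv :
      HasDerivAt (fun t : ℝ => fderiv ℝ u (x + t • a)) (fderiv ℝ (fderiv ℝ u) x a) 0 :=
    hsecond.comp_hasDerivAt 0 (hline 0)
  rw [hfirst.deriv_eq, (hderiv.clm_apply (hasDerivAt_const 0 a)).deriv, map_zero, add_zero]

lemma fderiv_fderiv_nonneg_of_isLocalMin (hu : ContDiffAt ℝ 2 u x) (hmin : IsLocalMin u x)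
    (a : E) : 0 ≤ fderiv ℝ (fderiv ℝ u) x a a := by
  have hline : ContinuousAt (fun t : ℝ => x + t • a) 0 := by fun_prop
  rw [← deriv_deriv_comp_add_smul hu]
  refine deriv_deriv_nonneg_of_isLocalMin ?_ ?_
  · have hmin' : IsLocalMin u (x + (0 : ℝ) • a) := by simpa using hmin
    exact IsLocalMin.comp_continuous (g := fun t : ℝ => x + t • a) hmin' hline
  · exact ContinuousAt.comp (by simpa using hu.continuousAt) hline

end SecondDerivative

section Hessian

variable {n : ℕ} {u w : EuclideanSpace ℝ (Fin n) → ℝ} {x : EuclideanSpace ℝ (Fin n)}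

lemma hess_apply (hu : ContDiffAt ℝ 2 u x) (i j : Fin n) :
    hess n u x i j = fderiv ℝ (fderiv ℝ u) x (EuclideanSpace.single i 1)
      (EuclideanSpace.single j 1) := by
  have hd : HasFDerivAt (fderiv ℝ u) (fderiv ℝ (fderiv ℝ u) x) x :=
    ((hu.fderiv_right (m := 1) le_rfl).differentiableAt one_ne_zero).hasFDerivAt
  rw [hess, (hd.clm_apply (hasFDerivAt_const _ x)).fderiv]
  simp

lemma isHermitian_hess (hu : ContDiffAt ℝ 2 u x) : (hess n u x).IsHermitian := by
  ext i j
  simp only [Matrix.conjTranspose_apply, star_trivial, hess_apply hu]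
  exact hu.isSymmSndFDerivAt (by simp) _ _

lemma inner_toEuclideanCLM_hess (hu : ContDiffAt ℝ 2 u x) (a c : EuclideanSpace ℝ (Fin n)) :
    inner ℝ (Matrix.toEuclideanCLM (𝕜 := ℝ) (hess n u x) a) c =
      fderiv ℝ (fderiv ℝ u) x a c := by
  have hexpand (y : EuclideanSpace ℝ (Fin n)) : ∑ i, y i • EuclideanSpace.single i (1 : ℝ) = y := by
    simpa using (EuclideanSpace.basisFun (Fin n) ℝ).sum_repr y
  have hsymm (i j : Fin n) : hess n u x i j = fderiv ℝ (fderiv ℝ u) x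
      (EuclideanSpace.single j 1) (EuclideanSpace.single i 1) := by
    rw [hess_apply hu]
    exact hu.isSymmSndFDerivAt (by simp) _ _
  conv_rhs => rw [← hexpand a, ← hexpand c]
  simp only [EuclideanSpace.inner_eq_star_dotProduct, Matrix.ofLp_toEuclideanCLM, star_trivial,
    dotProduct, Matrix.mulVec, hsymm, map_sum, map_smul, _root_.sum_apply, _root_.smul_apply,
    smul_eq_mul, Finset.mul_sum]
  exact Finset.sum_congr rfl fun i _ => Finset.sum_congr rfl fun j _ => by ring

lemma posSemidef_hess_of_isLocalMin (hu : ContDiffAt ℝ 2 u x) (hmin : IsLocalMin u x) :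
    (hess n u x).PosSemidef := by
  refine .of_dotProduct_mulVec_nonneg (isHermitian_hess hu) fun a => ?_
  have h := fderiv_fderiv_nonneg_of_isLocalMin hu hmin (WithLp.toLp 2 a)
  rw [← inner_toEuclideanCLM_hess hu] at h
  simpa [EuclideanSpace.inner_eq_star_dotProduct, Matrix.ofLp_toEuclideanCLM] using h

lemma hess_sub (hu : ContDiffAt ℝ 2 u x) (hw : ContDiffAt ℝ 2 w x) :
    hess n (u - w) x = hess n u x - hess n w x := by
  have hdiff {f : EuclideanSpace ℝ (Fin n) → ℝ} (hf : ContDiffAt ℝ 2 f x) :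
      (∀ᶠ y in 𝓝 x, DifferentiableAt ℝ f y) ∧ DifferentiableAt ℝ (fderiv ℝ f) x :=
    ⟨(hf.eventually (by simp)).mono fun y hy => hy.differentiableAt two_ne_zero,
      (hf.fderiv_right (m := 1) le_rfl).differentiableAt one_ne_zero⟩
  have hfderiv : fderiv ℝ (u - w) =ᶠ[𝓝 x] fderiv ℝ u - fderiv ℝ w := by
    filter_upwards [(hdiff hu).1, (hdiff hw).1] with y h₁ h₂ using fderiv_sub h₁ h₂
  have huw : ContDiffAt ℝ 2 (u - w) x := hu.sub hw
  ext i j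
  simp only [Matrix.sub_apply, hess_apply hu, hess_apply hw, hess_apply huw,
    hfderiv.fderiv_eq, fderiv_sub (hdiff hu).2 (hdiff hw).2, _root_.sub_apply]

lemma hess_apply_of_hasGradientAt {G : EuclideanSpace ℝ (Fin n) → EuclideanSpace ℝ (Fin n)}
    {G' : EuclideanSpace ℝ (Fin n) →L[ℝ] EuclideanSpace ℝ (Fin n)}
    (hu : ∀ y, HasGradientAt u (G y) y) (hG : HasFDerivAt G G' x) (i j : Fin n) :
    hess n u x i j = G' (EuclideanSpace.single i 1) j := by
  have h (y) : fderiv ℝ u y (EuclideanSpace.single j 1) = G y j := by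
    simp [(hu y).fderiv_apply, EuclideanSpace.inner_single_right]
  simp only [hess, h]
  have hGj : HasFDerivAt (fun y => G y j) ((EuclideanSpace.proj j).comp G') x :=
    HasFDerivAt.comp x (EuclideanSpace.proj (𝕜 := ℝ) j).hasFDerivAt hG
  rw [hGj.fderiv]
  rfl

lemma hess_inner_left (p : EuclideanSpace ℝ (Fin n)) :
    hess n (inner ℝ p) x = 0 := by
  ext i j
  have h (y) : HasGradientAt (inner ℝ p) p y := (innerSL ℝ p).hasFDerivAt
  simp [hess_apply_of_hasGradientAt h (hasFDerivAt_const p x)]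

lemma norm_gradient {E : Type*} [NormedAddCommGroup E] [InnerProductSpace ℝ E]
    [CompleteSpace E] (f : E → ℝ) (x : E) : ‖∇ f x‖ = ‖fderiv ℝ f x‖ := by
  rw [← toDual_gradient, LinearIsometryEquiv.norm_map]

lemma hasFDerivAt_gradient (hu : ContDiffAt ℝ 2 u x) :
    HasFDerivAt (∇ u) (Matrix.toEuclideanCLM (𝕜 := ℝ) (hess n u x)) x := by
  have hd : HasFDerivAt (fderiv ℝ u) (fderiv ℝ (fderiv ℝ u) x) x :=
    ((hu.fderiv_right (m := 1) le_rfl).differentiableAt one_ne_zero).hasFDerivAt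
  refine ((InnerProductSpace.toDual ℝ _).symm.toContinuousLinearEquiv.hasFDerivAt.comp x
    hd).congr_fderiv ?_
  ext1 a
  refine ext_inner_right ℝ fun c => ?_
  rw [inner_toEuclideanCLM_hess hu]
  exact InnerProductSpace.toDual_symm_apply

lemma det_toEuclideanCLM (M : Matrix (Fin n) (Fin n) ℝ) :
    (Matrix.toEuclideanCLM (𝕜 := ℝ) M).det = M.det :=
  LinearMap.det_toLpLin 2 M

lemma continuousOn_hess {Ω : Set (EuclideanSpace ℝ (Fin n))} (hu : ContDiffOn ℝ 2 u Ω)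
    (hΩ : IsOpen Ω) : ContinuousOn (hess n u) Ω := by
  have h : ContinuousOn (fderiv ℝ (fderiv ℝ u)) Ω :=
    (hu.fderiv_of_isOpen hΩ (m := 1) le_rfl).continuousOn_fderiv_of_isOpen hΩ le_rfl
  refine continuousOn_pi.2 fun i => continuousOn_pi.2 fun j => ?_
  exact ((h.clm_apply continuousOn_const).clm_apply continuousOn_const).congr
    fun x hx => hess_apply (hu.contDiffAt (hΩ.mem_nhds hx)) i j

end Hessian

section LowerContactSet

lemma exists_isLocalMin_sub_inner {E : Type*} [NormedAddCommGroup E] [InnerProductSpace ℝ E]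
    [ProperSpace E] {Ω : Set E} {u : E → ℝ} {x₀ p : E} {R δ : ℝ} (hΩ : IsOpen Ω) (hR : 0 < R)
    (hx₀ : x₀ ∈ Ω) (hΩR : Ω ⊆ Metric.closedBall x₀ R) (hu : ContinuousOn u (closure Ω))
    (hfr : ∀ x ∈ frontier Ω, 0 ≤ u x) (hδ : u x₀ ≤ -(δ * R)) (hp : ‖p‖ < δ) :
    ∃ x ∈ Ω, IsLocalMin (u - inner ℝ p) x := by
  have hcl : closure Ω ⊆ Metric.closedBall x₀ R :=
    closure_minimal hΩR Metric.isClosed_closedBall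
  have hcompact : IsCompact (closure Ω) :=
    (isCompact_closedBall x₀ R).of_isClosed_subset isClosed_closure hcl
  obtain ⟨x, hx, hmin⟩ := hcompact.exists_isMinOn ⟨x₀, subset_closure hx₀⟩
    (hu.sub (innerSL ℝ p).continuous.continuousOn)
  suffices hxΩ : x ∈ Ω from
    ⟨x, hxΩ, (hmin.on_subset subset_closure).isLocalMin (hΩ.mem_nhds hxΩ)⟩
  by_contra hxΩ
  have hux : 0 ≤ u x := hfr x (hΩ.frontier_eq ▸ ⟨hx, hxΩ⟩)
  have hle : u x - inner ℝ p x ≤ u x₀ - inner ℝ p x₀ := hmin (subset_closure hx₀)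
  have hdist : ‖x - x₀‖ ≤ R := mem_closedBall_iff_norm.1 (hcl hx)
  have hinner : inner ℝ p x - inner ℝ p x₀ < δ * R := calc
    inner ℝ p x - inner ℝ p x₀ = inner ℝ p (x - x₀) := (inner_sub_right p x x₀).symm
    _ ≤ ‖p‖ * ‖x - x₀‖ := real_inner_le_norm _ _
    _ ≤ ‖p‖ * R := by gcongr
    _ < δ * R := by gcongr
  linarith

variable {n : ℕ} {u : EuclideanSpace ℝ (Fin n) → ℝ} {Ω : Set (EuclideanSpace ℝ (Fin n))} {δ : ℝ}

/-- The points of `Ω` at which `u` satisfies the second-order conditions for being touched from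
below by an affine function of slope less than `δ`. It contains the lower contact set of the
Alexandrov–Bakelman–Pucci method, and the area formula is applied to `∇ u` on it. -/
def lowerContactSet (u : EuclideanSpace ℝ (Fin n) → ℝ) (Ω : Set (EuclideanSpace ℝ (Fin n)))
    (δ : ℝ) : Set (EuclideanSpace ℝ (Fin n)) :=
  {x ∈ Ω | ‖∇ u x‖ < δ ∧ (hess n u x).PosSemidef}

lemma measurableSet_lowerContactSet (hΩ : IsOpen Ω) (hu : ContDiffOn ℝ 2 u Ω) :
    MeasurableSet (lowerContactSet u Ω δ) := by
  have hgrad : ContinuousOn (∇ u) Ω := fun x hx =>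
    (hasFDerivAt_gradient (hu.contDiffAt (hΩ.mem_nhds hx))).continuousAt.continuousWithinAt
  have hopen₁ : IsOpen (Ω ∩ ∇ u ⁻¹' Metric.ball 0 δ) :=
    hgrad.isOpen_inter_preimage hΩ Metric.isOpen_ball
  have hopen₂ : IsOpen (Ω ∩ hess n u ⁻¹' {N | N.PosSemidef}ᶜ) :=
    (continuousOn_hess hu hΩ).isOpen_inter_preimage hΩ isClosed_setOf_posSemidef.isOpen_compl
  have heq : lowerContactSet u Ω δ =
      (Ω ∩ ∇ u ⁻¹' Metric.ball 0 δ) \ (Ω ∩ hess n u ⁻¹' {N | N.PosSemidef}ᶜ) := by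
    ext x
    simp only [lowerContactSet, Set.mem_ofPred_eq, Set.mem_sdiff, Set.mem_inter_iff,
      Set.mem_preimage, mem_ball_zero_iff, Set.mem_compl_iff]
    tauto
  rw [heq]
  exact hopen₁.measurableSet.diff hopen₂.measurableSet

lemma ball_subset_gradient_image_lowerContactSet {x₀ : EuclideanSpace ℝ (Fin n)} {R : ℝ}
    (hΩ : IsOpen Ω) (hR : 0 < R) (hx₀ : x₀ ∈ Ω) (hΩR : Ω ⊆ Metric.closedBall x₀ R)
    (hu : ContinuousOn u (closure Ω)) (hu₂ : ContDiffOn ℝ 2 u Ω)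
    (hfr : ∀ x ∈ frontier Ω, 0 ≤ u x) (hδ : u x₀ ≤ -(δ * R)) :
    Metric.ball 0 δ ⊆ ∇ u '' lowerContactSet u Ω δ := by
  intro p hp
  rw [mem_ball_zero_iff] at hp
  obtain ⟨x, hx, hmin⟩ := exists_isLocalMin_sub_inner hΩ hR hx₀ hΩR hu hfr hδ hp
  have hux : ContDiffAt ℝ 2 u x := hu₂.contDiffAt (hΩ.mem_nhds hx)
  have hpx : ContDiffAt ℝ 2 (inner ℝ p) x := (innerSL ℝ p).contDiff.contDiffAt
  have hgrad : ∇ u x = p := by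
    have h : fderiv ℝ u x - innerSL ℝ p = 0 := by
      rw [← hmin.fderiv_eq_zero, fderiv_sub (hux.differentiableAt two_ne_zero)
        (hpx.differentiableAt two_ne_zero)]
      exact congrArg _ (innerSL ℝ p).hasFDerivAt.fderiv.symm
    refine ext_inner_right ℝ fun y => ?_
    rw [inner_gradient_left, sub_eq_zero.1 h, innerSL_apply_apply]
  have hpsd : (hess n u x).PosSemidef := by
    rw [← sub_zero (hess n u x), ← hess_inner_left p, ← hess_sub hux hpx]
    exact posSemidef_hess_of_isLocalMin (hux.sub hpx) hmin
  exact ⟨x, ⟨hx, hgrad ▸ hp, hpsd⟩, hgrad⟩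

lemma volume_ball_le_lintegral_det_hess {x₀ : EuclideanSpace ℝ (Fin n)} {R : ℝ}
    (hΩ : IsOpen Ω) (hR : 0 < R) (hx₀ : x₀ ∈ Ω) (hΩR : Ω ⊆ Metric.closedBall x₀ R)
    (hu : ContinuousOn u (closure Ω)) (hu₂ : ContDiffOn ℝ 2 u Ω)
    (hfr : ∀ x ∈ frontier Ω, 0 ≤ u x) (hδ : u x₀ ≤ -(δ * R)) :
    volume (Metric.ball (0 : EuclideanSpace ℝ (Fin n)) δ) ≤
      ∫⁻ x in lowerContactSet u Ω δ, ENNReal.ofReal (hess n u x).det := by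
  have hmeas : MeasurableSet (lowerContactSet u Ω δ) := measurableSet_lowerContactSet hΩ hu₂
  calc volume (Metric.ball (0 : EuclideanSpace ℝ (Fin n)) δ)
      ≤ volume (∇ u '' lowerContactSet u Ω δ) :=
        measure_mono (ball_subset_gradient_image_lowerContactSet hΩ hR hx₀ hΩR hu hu₂ hfr hδ)
    _ ≤ ∫⁻ x in lowerContactSet u Ω δ,
          ENNReal.ofReal |(Matrix.toEuclideanCLM (𝕜 := ℝ) (hess n u x)).det| :=
        addHaar_image_le_lintegral_abs_det_fderiv volume hmeas fun x hx =>
          (hasFDerivAt_gradient (hu₂.contDiffAt (hΩ.mem_nhds hx.1))).hasFDerivWithinAt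
    _ = ∫⁻ x in lowerContactSet u Ω δ, ENNReal.ofReal (hess n u x).det :=
        setLIntegral_congr_fun hmeas fun x hx => by
          rw [det_toEuclideanCLM, abs_of_nonneg hx.2.2.det_nonneg]

end LowerContactSet

section ABP

variable {n : ℕ} {lam Lam : ℝ} {v φ : EuclideanSpace ℝ (Fin n) → ℝ}

lemma det_hess_sub_le {x : EuclideanSpace ℝ (Fin n)} {β L δ : ℝ} (hlam : 0 < lam)
    (hLam : lam ≤ Lam) (hv : ContDiffAt ℝ 2 v x) (hφ : ContDiffAt ℝ 2 φ x)
    (hsup : pucciMinus n lam Lam (hess n v x) - β * gradNorm n v x ≤ -1)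
    (hφ_pucci : -1 ≤ pucciMinus n lam Lam (hess n φ x)) (hφ_grad : ‖fderiv ℝ φ x‖ ≤ L)
    (hgrad : ‖∇ (v - φ) x‖ ≤ δ) (hpsd : (hess n (v - φ) x).PosSemidef) :
    (hess n (v - φ) x).det ≤ (|β| * ((L + δ) / lam)) ^ n := by
  have hsum : hess n v x = hess n φ x + hess n (v - φ) x := by rw [hess_sub hv hφ]; abel
  have hpucci : -1 + lam * (hess n (v - φ) x).trace ≤ pucciMinus n lam Lam (hess n v x) := calc
    _ ≤ pucciMinus n lam Lam (hess n φ x) + pucciMinus n lam Lam (hess n (v - φ) x) :=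
      add_le_add hφ_pucci (mul_trace_le_pucciMinus hLam hpsd)
    _ ≤ pucciMinus n lam Lam (hess n v x) :=
      hsum ▸ pucciMinus_add_le hLam (isHermitian_hess hφ) hpsd.isHermitian
  have hgrad_v : gradNorm n v x ≤ L + δ := by
    rw [norm_gradient, fderiv_sub (hv.differentiableAt two_ne_zero)
      (hφ.differentiableAt two_ne_zero)] at hgrad
    calc gradNorm n v x = ‖fderiv ℝ φ x + (fderiv ℝ v x - fderiv ℝ φ x)‖ := by
          rw [gradNorm, add_sub_cancel]
      _ ≤ L + δ := (norm_add_le _ _).trans (add_le_add hφ_grad hgrad)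
  have hdrift : β * gradNorm n v x ≤ |β| * (L + δ) :=
    mul_le_mul (le_abs_self β) hgrad_v (norm_nonneg _) (abs_nonneg β)
  have htrace : (hess n (v - φ) x).trace ≤ |β| * ((L + δ) / lam) := by
    rw [← mul_div_assoc, le_div_iff₀ hlam]
    linarith
  calc (hess n (v - φ) x).det ≤ (hess n (v - φ) x).trace ^ n := by
        simpa using det_le_trace_pow_of_posSemidef hpsd
    _ ≤ (|β| * ((L + δ) / lam)) ^ n := pow_le_pow_left₀ hpsd.trace_nonneg htrace n

/-- `v` is a classical supersolution in `Ω` of the extremal equation `𝓜⁻(D²v) - b|Dv| = -1`. -/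
structure IsPucciSupersolution (n : ℕ) (lam Lam : ℝ) (b v : EuclideanSpace ℝ (Fin n) → ℝ)
    (Ω : Set (EuclideanSpace ℝ (Fin n))) : Prop where
  contDiffOn : ContDiffOn ℝ 2 v Ω
  pucciMinus_sub_le : ∀ x ∈ Ω, pucciMinus n lam Lam (hess n v x) - b x * gradNorm n v x ≤ -1

/-- `φ` is a classical subsolution in `Ω` of the driftless equation `𝓜⁻(D²φ) = -1` with slope at
most `L`: a test function to be compared with supersolutions of the equation with drift. -/
structure IsPucciBarrier (n : ℕ) (lam Lam L : ℝ) (φ : EuclideanSpace ℝ (Fin n) → ℝ)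
    (Ω : Set (EuclideanSpace ℝ (Fin n))) : Prop where
  contDiff : ContDiff ℝ 2 φ
  neg_one_le_pucciMinus : ∀ x ∈ Ω, -1 ≤ pucciMinus n lam Lam (hess n φ x)
  norm_fderiv_le : ∀ x ∈ Ω, ‖fderiv ℝ φ x‖ ≤ L

variable {b : EuclideanSpace ℝ (Fin n) → ℝ} {Ω : Set (EuclideanSpace ℝ (Fin n))}
  {x₀ : EuclideanSpace ℝ (Fin n)} {R L δ : ℝ}

lemma IsPucciSupersolution.mono {Ω' : Set (EuclideanSpace ℝ (Fin n))}
    (hv : IsPucciSupersolution n lam Lam b v Ω) (h : Ω' ⊆ Ω) :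
    IsPucciSupersolution n lam Lam b v Ω' :=
  ⟨hv.contDiffOn.mono h, fun x hx => hv.pucciMinus_sub_le x (h hx)⟩

lemma IsPucciSupersolution.volume_ball_le (hv : IsPucciSupersolution n lam Lam b v Ω)
    (hφ : IsPucciBarrier n lam Lam L φ Ω) (hlam : 0 < lam) (hLam : lam ≤ Lam) (hΩ : IsOpen Ω)
    (hR : 0 < R) (hx₀ : x₀ ∈ Ω) (hΩR : Ω ⊆ Metric.closedBall x₀ R)
    (hvc : ContinuousOn v (closure Ω)) (hfr : ∀ x ∈ frontier Ω, φ x ≤ v x) (hLδ : 0 ≤ L + δ)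
    (hδ : δ * R ≤ φ x₀ - v x₀) :
    volume (Metric.ball (0 : EuclideanSpace ℝ (Fin n)) δ) ≤
      ENNReal.ofReal ((L + δ) / lam) ^ n * ∫⁻ x in Ω, ‖b x‖ₑ ^ n := by
  have hu₂ : ContDiffOn ℝ 2 (v - φ) Ω := hv.contDiffOn.sub hφ.contDiff.contDiffOn
  calc volume (Metric.ball (0 : EuclideanSpace ℝ (Fin n)) δ)
      ≤ ∫⁻ x in lowerContactSet (v - φ) Ω δ, ENNReal.ofReal (hess n (v - φ) x).det := by
        refine volume_ball_le_lintegral_det_hess hΩ hR hx₀ hΩR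
          (hvc.sub hφ.contDiff.continuous.continuousOn) hu₂
          (fun x hx => sub_nonneg.2 (hfr x hx)) ?_
        simp only [Pi.sub_apply]
        linarith
    _ ≤ ∫⁻ x in lowerContactSet (v - φ) Ω δ,
          ENNReal.ofReal ((L + δ) / lam) ^ n * ‖b x‖ₑ ^ n := by
        refine setLIntegral_mono_ae' (measurableSet_lowerContactSet hΩ hu₂)
          (Eventually.of_forall fun x hx => ?_)
        have hdet := det_hess_sub_le hlam hLam (hv.contDiffOn.contDiffAt (hΩ.mem_nhds hx.1))
          hφ.contDiff.contDiffAt (hv.pucciMinus_sub_le x hx.1) (hφ.neg_one_le_pucciMinus x hx.1)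
          (hφ.norm_fderiv_le x hx.1) hx.2.1.le hx.2.2
        rw [← mul_pow, Real.enorm_eq_ofReal_abs, mul_comm,
          ← ENNReal.ofReal_mul (abs_nonneg (b x)), ← ENNReal.ofReal_pow (by positivity)]
        exact ENNReal.ofReal_le_ofReal hdet
    _ = ENNReal.ofReal ((L + δ) / lam) ^ n * ∫⁻ x in lowerContactSet (v - φ) Ω δ, ‖b x‖ₑ ^ n :=
        lintegral_const_mul' _ _ (ENNReal.pow_ne_top ENNReal.ofReal_ne_top)
    _ ≤ ENNReal.ofReal ((L + δ) / lam) ^ n * ∫⁻ x in Ω, ‖b x‖ₑ ^ n := by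
        gcongr
        exact Set.sep_subset _ _

end ABP

section Comparison

variable {n : ℕ} {lam Lam q R L : ℝ} {b v φ : EuclideanSpace ℝ (Fin n) → ℝ}
  {Ω : Set (EuclideanSpace ℝ (Fin n))} {x₀ : EuclideanSpace ℝ (Fin n)} {K : ℝ≥0}

lemma LpNormE_eq_eLpNorm (hq : 0 < q) :
    LpNormE n q b Ω = eLpNorm b (ENNReal.ofReal q) (volume.restrict Ω) := by
  rw [eLpNorm_eq_lintegral_rpow_enorm_toReal (by simpa using hq) ENNReal.ofReal_ne_top,
    ENNReal.toReal_ofReal hq.le, LpNormE]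
  simp only [Real.enorm_eq_ofReal_abs, ENNReal.ofReal_rpow_of_nonneg (abs_nonneg _) hq.le]

lemma LpNormE_mono_set {Ω' : Set (EuclideanSpace ℝ (Fin n))} (hq : 0 ≤ q) (h : Ω' ⊆ Ω) :
    LpNormE n q b Ω' ≤ LpNormE n q b Ω := by
  unfold LpNormE
  gcongr

lemma lintegral_enorm_pow_le_of_LpNormE_le (hn : n ≠ 0) (hq : n < q)
    (hbm : AEStronglyMeasurable b (volume.restrict Ω)) (hbK : LpNormE n q b Ω ≤ K) :
    ∫⁻ x in Ω, ‖b x‖ₑ ^ n ≤ (K * volume Ω ^ (1 / (n : ℝ) - 1 / q)) ^ n := by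
  have hq₀ : 0 < q := n.cast_nonneg.trans_lt hq
  have hnq : (n : ℝ≥0∞) ≤ ENNReal.ofReal q := by
    rw [← ENNReal.ofReal_natCast]
    exact ENNReal.ofReal_le_ofReal hq.le
  have hholder := eLpNorm_le_eLpNorm_mul_rpow_measure_univ hnq hbm
  rw [← LpNormE_eq_eLpNorm hq₀, Measure.restrict_apply_univ, ENNReal.toReal_natCast,
    ENNReal.toReal_ofReal hq₀.le] at hholder
  calc ∫⁻ x in Ω, ‖b x‖ₑ ^ n = eLpNorm b n (volume.restrict Ω) ^ n := by
        simpa using (eLpNorm_nnreal_pow_eq_lintegral (μ := volume.restrict Ω) (f := b)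
          (Nat.cast_ne_zero (R := ℝ≥0).2 hn)).symm
    _ ≤ (K * volume Ω ^ (1 / (n : ℝ) - 1 / q)) ^ n := by
        gcongr
        exact hholder.trans (by gcongr)

/-- The constant of the comparison principle for supersolutions whose drift has `L^q` norm at
most `K`; the power of the volume of the unit ball comes from Hölder's inequality on small balls. -/
noncomputable def comparisonConst (n : ℕ) (lam q : ℝ) (K : ℝ≥0) : ℝ :=
  2 * K / (lam * volume.real (Metric.ball (0 : EuclideanSpace ℝ (Fin n)) 1) ^ (1 / q))

lemma comparisonConst_nonneg (hlam : 0 < lam) : 0 ≤ comparisonConst n lam q K := by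
  unfold comparisonConst
  positivity

lemma pow_mul_rpow_inv_sub_inv {ω : ℝ} (hn : n ≠ 0) (hR : 0 ≤ R) (hω : 0 < ω) :
    (R ^ n * ω) ^ (1 / (n : ℝ) - 1 / q) = R ^ (1 - n / q) * (ω ^ (n : ℝ)⁻¹ / ω ^ (1 / q)) := by
  rw [Real.mul_rpow (by positivity) hω.le, Real.rpow_sub hω, one_div (n : ℝ), ← Real.rpow_natCast,
    ← Real.rpow_mul hR, mul_sub, mul_inv_cancel₀ (Nat.cast_ne_zero.2 hn), mul_one_div]

lemma IsPucciSupersolution.slope_le {δ : ℝ} (hv : IsPucciSupersolution n lam Lam b v Ω)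
    (hφ : IsPucciBarrier n lam Lam L φ Ω) (hn : n ≠ 0) (hlam : 0 < lam) (hLam : lam ≤ Lam)
    (hq : n < q) (hbm : AEStronglyMeasurable b (volume.restrict Ω)) (hbK : LpNormE n q b Ω ≤ K)
    (hΩ : IsOpen Ω) (hR : 0 < R) (hx₀ : x₀ ∈ Ω) (hΩR : Ω ⊆ Metric.closedBall x₀ R)
    (hvc : ContinuousOn v (closure Ω)) (hfr : ∀ x ∈ frontier Ω, φ x ≤ v x) (hL : 0 ≤ L)
    (hδ₀ : 0 < δ) (hδ : δ * R ≤ φ x₀ - v x₀) :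
    δ ≤ comparisonConst n lam q K / 2 * (L + δ) * R ^ (1 - n / q) := by
  set ω : ℝ := volume.real (Metric.ball (0 : EuclideanSpace ℝ (Fin n)) 1) with hω
  have hω₀ : 0 < ω := ENNReal.toReal_pos (Metric.measure_ball_pos _ _ one_pos).ne'
    measure_ball_lt_top.ne
  have hexp : 0 ≤ 1 / (n : ℝ) - 1 / q := sub_nonneg.2 <|
    one_div_le_one_div_of_le (Nat.cast_pos.2 (Nat.pos_of_ne_zero hn)) hq.le
  have habp : volume (Metric.ball (0 : EuclideanSpace ℝ (Fin n)) δ) ≤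
      (ENNReal.ofReal ((L + δ) / lam) *
        (K * volume (Metric.closedBall x₀ R) ^ (1 / (n : ℝ) - 1 / q))) ^ n := calc
    _ ≤ ENNReal.ofReal ((L + δ) / lam) ^ n * ∫⁻ x in Ω, ‖b x‖ₑ ^ n :=
      hv.volume_ball_le hφ hlam hLam hΩ hR hx₀ hΩR hvc hfr (by positivity) hδ
    _ ≤ ENNReal.ofReal ((L + δ) / lam) ^ n *
          (K * volume Ω ^ (1 / (n : ℝ) - 1 / q)) ^ n := by
      gcongr
      exact lintegral_enorm_pow_le_of_LpNormE_le hn hq hbm hbK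
    _ ≤ _ := by
      rw [← mul_pow]
      gcongr
  have hreal : (δ * ω ^ (n : ℝ)⁻¹) ^ n ≤
      ((L + δ) / lam * (K * (R ^ n * ω) ^ (1 / (n : ℝ) - 1 / q))) ^ n := by
    have hfin : volume (Metric.closedBall x₀ R) ^ (1 / (n : ℝ) - 1 / q) ≠ ∞ :=
      ENNReal.rpow_ne_top_of_nonneg hexp measure_closedBall_lt_top.ne
    have h := ENNReal.toReal_mono (by finiteness) habp
    rw [Measure.addHaar_ball_of_pos _ _ hδ₀, Measure.addHaar_closedBall _ _ hR.le] at h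
    rw [mul_pow, Real.rpow_inv_natCast_pow hω₀.le hn]
    simpa [ENNReal.toReal_ofReal, hδ₀.le, hR.le, show 0 ≤ (L + δ) / lam by positivity,
      ← ENNReal.toReal_rpow, measureReal_def, hω] using h
  have hroot := le_of_pow_le_pow_left₀ hn (by positivity) hreal
  rw [pow_mul_rpow_inv_sub_inv hn hR.le hω₀] at hroot
  refine le_of_mul_le_mul_right (hroot.trans_eq ?_) (by positivity : 0 < ω ^ (n : ℝ)⁻¹)
  rw [comparisonConst, ← hω]
  field_simp

lemma IsPucciSupersolution.sub_le_comparisonConst_mul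
    (hv : IsPucciSupersolution n lam Lam b v Ω) (hφ : IsPucciBarrier n lam Lam L φ Ω)
    (hn : n ≠ 0) (hlam : 0 < lam) (hLam : lam ≤ Lam) (hq : n < q)
    (hbm : AEStronglyMeasurable b (volume.restrict Ω)) (hbK : LpNormE n q b Ω ≤ K)
    (hΩ : IsOpen Ω) (hR : 0 < R) (hx₀ : x₀ ∈ Ω) (hΩR : Ω ⊆ Metric.closedBall x₀ R)
    (hvc : ContinuousOn v (closure Ω)) (hfr : ∀ x ∈ frontier Ω, φ x ≤ v x) (hL : 0 ≤ L)
    (hsmall : comparisonConst n lam q K * R ^ (1 - n / q) ≤ 1) :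
    φ x₀ - v x₀ ≤ comparisonConst n lam q K * L * R * R ^ (1 - n / q) := by
  by_contra! hlt
  have hC : 0 ≤ comparisonConst n lam q K := comparisonConst_nonneg hlam
  have hpos : 0 < φ x₀ - v x₀ := lt_of_le_of_lt (by positivity) hlt
  set δ : ℝ := (φ x₀ - v x₀) / R
  have hδR : δ * R = φ x₀ - v x₀ := div_mul_cancel₀ _ hR.ne'
  have hδ₀ : 0 < δ := div_pos hpos hR
  have hslope := hv.slope_le hφ hn hlam hLam hq hbm hbK hΩ hR hx₀ hΩR hvc hfr hL hδ₀ hδR.le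
  have habsorb : δ ≤ comparisonConst n lam q K * L * R ^ (1 - n / q) := by
    linarith [mul_le_mul_of_nonneg_left hsmall hδ₀.le]
  have hle : δ * R ≤ comparisonConst n lam q K * L * R ^ (1 - n / q) * R :=
    mul_le_mul_of_nonneg_right habsorb hR.le
  linarith

end Comparison

section QuarticBarrier

variable {E : Type*} [NormedAddCommGroup E] [InnerProductSpace ℝ E]

/-- The test function `k + a (1 - |x|²) + A (1 - |x|²)² - B |x - x₀|²`. The quartic term makes it a
subsolution away from the origin, the last one localizes it near `x₀`. -/
def quarticBarrier (k a A B : ℝ) (x₀ x : E) : ℝ :=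
  k + a * (1 - ‖x‖ ^ 2) + A * (1 - ‖x‖ ^ 2) ^ 2 - B * ‖x - x₀‖ ^ 2

lemma contDiff_quarticBarrier (k a A B : ℝ) (x₀ : E) {m : WithTop ℕ∞} :
    ContDiff ℝ m (quarticBarrier k a A B x₀) := by
  have h₁ : ContDiff ℝ m fun x : E => ‖x‖ ^ 2 := contDiff_norm_sq ℝ
  have h₂ : ContDiff ℝ m fun x : E => ‖x - x₀‖ ^ 2 := (contDiff_id.sub contDiff_const).norm_sq ℝ
  unfold quarticBarrier
  fun_prop

lemma hasFDerivAt_norm_sq (x : E) :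
    HasFDerivAt (fun y : E => ‖y‖ ^ 2) ((2 : ℝ) • innerSL ℝ x) x := by
  simpa only [two_smul] using (hasStrictFDerivAt_norm_sq x).hasFDerivAt

lemma hasGradientAt_quarticBarrier [CompleteSpace E] (k a A B : ℝ) (x₀ x : E) :
    HasGradientAt (quarticBarrier k a A B x₀)
      (-(2 * a + 4 * A * (1 - ‖x‖ ^ 2)) • x - (2 * B) • (x - x₀)) x := by
  have h₁ : HasFDerivAt (fun y : E => 1 - ‖y‖ ^ 2) (-((2 : ℝ) • innerSL ℝ x)) x :=
    (hasFDerivAt_norm_sq x).const_sub 1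
  have h₂ : HasFDerivAt (fun y : E => ‖y - x₀‖ ^ 2) ((2 : ℝ) • innerSL ℝ (x - x₀)) x := by
    simpa only [id] using! ((hasFDerivAt_norm_sq (x - x₀)).comp x
      ((hasFDerivAt_id x).sub_const x₀))
  refine hasGradientAt_iff_hasFDerivAt.2 <| ((((h₁.const_mul a).const_add k).add
    ((h₁.pow 2).const_mul A)).sub (h₂.const_mul B)).congr_fderiv ?_
  ext y
  simp
  ring

lemma norm_fderiv_quarticBarrier_le [CompleteSpace E] {k a A B : ℝ} {x₀ x : E} (ha : 0 ≤ a)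
    (hA : 0 ≤ A) (hB : 0 ≤ B) (hx : ‖x‖ ≤ 1) :
    ‖fderiv ℝ (quarticBarrier k a A B x₀) x‖ ≤
      2 * a + 4 * A * (1 - ‖x‖ ^ 2) + 2 * B * ‖x - x₀‖ := by
  have hsq : 0 ≤ 1 - ‖x‖ ^ 2 := sub_nonneg.2 (pow_le_one₀ (norm_nonneg x) hx)
  rw [← norm_gradient, (hasGradientAt_quarticBarrier k a A B x₀ x).gradient]
  calc ‖-(2 * a + 4 * A * (1 - ‖x‖ ^ 2)) • x - (2 * B) • (x - x₀)‖
      ≤ ‖-(2 * a + 4 * A * (1 - ‖x‖ ^ 2)) • x‖ + ‖(2 * B) • (x - x₀)‖ := norm_sub_le _ _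
    _ = (2 * a + 4 * A * (1 - ‖x‖ ^ 2)) * ‖x‖ + 2 * B * ‖x - x₀‖ := by
        rw [norm_smul, norm_smul, norm_neg, Real.norm_of_nonneg (by positivity),
          Real.norm_of_nonneg (by positivity)]
    _ ≤ (2 * a + 4 * A * (1 - ‖x‖ ^ 2)) * 1 + 2 * B * ‖x - x₀‖ := by gcongr
    _ = 2 * a + 4 * A * (1 - ‖x‖ ^ 2) + 2 * B * ‖x - x₀‖ := by rw [mul_one]

variable {n : ℕ}

lemma hess_quarticBarrier (k a A B : ℝ) (x₀ x : EuclideanSpace ℝ (Fin n)) :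
    hess n (quarticBarrier k a A B x₀) x = (8 * A) • Matrix.vecMulVec x.ofLp x.ofLp +
      -((2 * a + 4 * A * (1 - ‖x‖ ^ 2) + 2 * B) • (1 : Matrix (Fin n) (Fin n) ℝ)) := by
  have hcoeff := ((((hasFDerivAt_norm_sq x).const_sub 1).const_mul (4 * A)).const_add (2 * a)).neg
  have hgrad := (hcoeff.smul (hasFDerivAt_id x)).sub
    (((hasFDerivAt_id x).sub_const x₀).const_smul (2 * B))
  ext i j
  rw [hess_apply_of_hasGradientAt (hasGradientAt_quarticBarrier k a A B x₀) hgrad]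
  rcases eq_or_ne j i with rfl | hij
  · simp [Matrix.vecMulVec_apply, EuclideanSpace.inner_single_right]
    ring
  · simp [Matrix.vecMulVec_apply, EuclideanSpace.inner_single_right, hij, hij.symm]
    ring

lemma le_pucciMinus_hess_quarticBarrier {lam Lam k a A B : ℝ}
    {x₀ x : EuclideanSpace ℝ (Fin n)} (hLam : lam ≤ Lam) (ha : 0 ≤ a) (hA : 0 ≤ A) (hB : 0 ≤ B)
    (hx : ‖x‖ ≤ 1) :
    8 * A * (lam * ‖x‖ ^ 2) - (2 * a + 4 * A * (1 - ‖x‖ ^ 2) + 2 * B) * (n * Lam) ≤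
      pucciMinus n lam Lam (hess n (quarticBarrier k a A B x₀) x) := by
  have hsq : 0 ≤ 1 - ‖x‖ ^ 2 := sub_nonneg.2 (pow_le_one₀ (norm_nonneg x) hx)
  set c : ℝ := 2 * a + 4 * A * (1 - ‖x‖ ^ 2) + 2 * B with hc
  have hpsd : ((8 * A) • Matrix.vecMulVec x.ofLp x.ofLp).PosSemidef := by
    simpa using (Matrix.posSemidef_vecMulVec_self_star x.ofLp).smul (by positivity : 0 ≤ 8 * A)
  have htrace : ((8 * A) • Matrix.vecMulVec x.ofLp x.ofLp).trace = 8 * A * ‖x‖ ^ 2 := by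
    rw [Matrix.trace_smul, Matrix.trace_vecMulVec, EuclideanSpace.real_norm_sq_eq]
    simp [dotProduct, sq]
  have hherm : (-(c • (1 : Matrix (Fin n) (Fin n) ℝ))).IsHermitian := by
    ext i j
    simp [Matrix.one_apply, eq_comm]
  have hrank_one := mul_trace_le_pucciMinus hLam hpsd
  have hmultiple := neg_mul_le_pucciMinus_neg_smul_one (n := n) hLam (by positivity : 0 ≤ c)
  rw [hess_quarticBarrier, ← hc]
  rw [htrace] at hrank_one
  linarith [pucciMinus_add_le hLam hpsd.isHermitian hherm]

end QuarticBarrier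

section UnitBall

variable {n : ℕ} {lam Lam q : ℝ} {K : ℝ≥0} {b v φ : EuclideanSpace ℝ (Fin n) → ℝ}

lemma IsPucciSupersolution.nonneg_of_frontier {Ω : Set (EuclideanSpace ℝ (Fin n))}
    (hv : IsPucciSupersolution n lam Lam b v Ω) (hlam : 0 ≤ lam) (hLam : lam ≤ Lam)
    (hΩ : IsOpen Ω) (hbdd : Bornology.IsBounded Ω) (hvc : ContinuousOn v (closure Ω))
    (hfr : ∀ x ∈ frontier Ω, 0 ≤ v x) {x : EuclideanSpace ℝ (Fin n)} (hx : x ∈ closure Ω) :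
    0 ≤ v x := by
  obtain ⟨z, hz, hmin⟩ := hbdd.isCompact_closure.exists_isMinOn ⟨x, hx⟩ hvc
  suffices hzΩ : z ∉ Ω from (hfr z (hΩ.frontier_eq ▸ ⟨hz, hzΩ⟩)).trans (hmin hx)
  intro hzΩ
  have hnhds := hΩ.mem_nhds hzΩ
  have hloc : IsLocalMin v z := (hmin.on_subset subset_closure).isLocalMin hnhds
  have hpsd := posSemidef_hess_of_isLocalMin (hv.contDiffOn.contDiffAt hnhds) hloc
  have hpucci : 0 ≤ pucciMinus n lam Lam (hess n v z) :=
    (mul_nonneg hlam hpsd.trace_nonneg).trans (mul_trace_le_pucciMinus hLam hpsd)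
  have hgrad : gradNorm n v z = 0 := by rw [gradNorm, hloc.fderiv_eq_zero, norm_zero]
  have hle := hv.pucciMinus_sub_le z hzΩ
  rw [hgrad, mul_zero, sub_zero] at hle
  linarith

/-- `v` is a classical supersolution of `𝓜⁻(D²v) - b|Dv| = -1` in the unit ball, continuous up to
the boundary and nonnegative there, with a drift `b` whose `L^q` norm is at most `K`. -/
structure IsUnitBallSupersolution (n : ℕ) (lam Lam q : ℝ) (K : ℝ≥0)
    (b v : EuclideanSpace ℝ (Fin n) → ℝ) : Prop
    extends IsPucciSupersolution n lam Lam b v (Metric.ball 0 1) where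
  aestronglyMeasurable : AEStronglyMeasurable b (volume.restrict (Metric.ball 0 1))
  LpNormE_le : LpNormE n q b (Metric.ball 0 1) ≤ K
  continuousOn : ContinuousOn v (Metric.closedBall 0 1)
  nonneg_of_mem_sphere : ∀ x ∈ Metric.sphere (0 : EuclideanSpace ℝ (Fin n)) 1, 0 ≤ v x

lemma IsUnitBallSupersolution.nonneg (hv : IsUnitBallSupersolution n lam Lam q K b v)
    (hlam : 0 ≤ lam) (hLam : lam ≤ Lam) {x : EuclideanSpace ℝ (Fin n)} (hx : ‖x‖ ≤ 1) :
    0 ≤ v x := by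
  have hclosure := closure_ball (0 : EuclideanSpace ℝ (Fin n)) one_ne_zero
  refine hv.toIsPucciSupersolution.nonneg_of_frontier hlam hLam Metric.isOpen_ball
    Metric.isBounded_ball (hclosure ▸ hv.continuousOn)
    (fun z hz => hv.nonneg_of_mem_sphere z (Metric.frontier_ball_subset_sphere hz)) ?_
  rwa [hclosure, mem_closedBall_zero_iff]

lemma IsUnitBallSupersolution.sub_le_comparisonConst_mul
    {Ω : Set (EuclideanSpace ℝ (Fin n))} {x₀ : EuclideanSpace ℝ (Fin n)} {R L : ℝ}
    (hv : IsUnitBallSupersolution n lam Lam q K b v) (hφ : IsPucciBarrier n lam Lam L φ Ω)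
    (hn : n ≠ 0) (hlam : 0 < lam) (hLam : lam ≤ Lam) (hq : n < q)
    (hΩ : IsOpen Ω) (hΩ₁ : Ω ⊆ Metric.ball 0 1) (hR : 0 < R) (hx₀ : x₀ ∈ Ω)
    (hΩR : Ω ⊆ Metric.closedBall x₀ R) (hfr : ∀ x ∈ frontier Ω, φ x ≤ v x) (hL : 0 ≤ L)
    (hsmall : comparisonConst n lam q K * R ^ (1 - n / q) ≤ 1) :
    φ x₀ - v x₀ ≤ comparisonConst n lam q K * L * R * R ^ (1 - n / q) :=
  (hv.toIsPucciSupersolution.mono hΩ₁).sub_le_comparisonConst_mul hφ hn hlam hLam hq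
    (hv.aestronglyMeasurable.mono_set hΩ₁)
    ((LpNormE_mono_set (n.cast_nonneg.trans hq.le) hΩ₁).trans hv.LpNormE_le) hΩ hR hx₀ hΩR
    (hv.continuousOn.mono ((closure_mono hΩ₁).trans Metric.closure_ball_subset_closedBall))
    hfr hL hsmall

lemma isPucciBarrier_quarticBarrier {k a A B L : ℝ} {Ω : Set (EuclideanSpace ℝ (Fin n))}
    {x₀ : EuclideanSpace ℝ (Fin n)} (hLam : lam ≤ Lam) (ha : 0 ≤ a) (hA : 0 ≤ A) (hB : 0 ≤ B)
    (hΩ : Ω ⊆ Metric.ball 0 1)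
    (hpucci : ∀ x ∈ Ω,
      -1 ≤ 8 * A * (lam * ‖x‖ ^ 2) - (2 * a + 4 * A * (1 - ‖x‖ ^ 2) + 2 * B) * (n * Lam))
    (hL : ∀ x ∈ Ω, 2 * a + 4 * A * (1 - ‖x‖ ^ 2) + 2 * B * ‖x - x₀‖ ≤ L) :
    IsPucciBarrier n lam Lam L (quarticBarrier k a A B x₀) Ω where
  contDiff := contDiff_quarticBarrier k a A B x₀
  neg_one_le_pucciMinus x hx := (hpucci x hx).trans <|
    le_pucciMinus_hess_quarticBarrier hLam ha hA hB (mem_ball_zero_iff.1 (hΩ hx)).le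
  norm_fderiv_le x hx := (hL x hx).trans' <|
    norm_fderiv_quarticBarrier_le ha hA hB (mem_ball_zero_iff.1 (hΩ hx)).le

lemma IsUnitBallSupersolution.sq_le_of_norm_add_le {ρ : ℝ} {y : EuclideanSpace ℝ (Fin n)}
    (hv : IsUnitBallSupersolution n lam Lam q K b v) (hn : n ≠ 0) (hlam : 0 < lam)
    (hLam : lam ≤ Lam) (hq : n < q) (hρ : 0 < ρ)
    (hsmall : 4 * comparisonConst n lam q K * ρ ^ (1 - n / q) ≤ 1) (hy : ‖y‖ + ρ ≤ 1) :
    ρ ^ 2 / (4 * n * Lam) ≤ v y := by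
  have hLam₀ : 0 < Lam := hlam.trans_le hLam
  have hC : 0 ≤ comparisonConst n lam q K * ρ ^ (1 - n / q) :=
    mul_nonneg (comparisonConst_nonneg hlam) (by positivity)
  set η : ℝ := 1 / (2 * n * Lam) with hη
  have hη₀ : 0 ≤ η := by positivity
  have hηn : 2 * η * (n * Lam) = 1 := by rw [hη]; field_simp
  have hball : Metric.ball y ρ ⊆ Metric.ball 0 1 :=
    Metric.ball_subset_ball' (by rw [dist_zero_right]; linarith)
  have hbarrier : IsPucciBarrier n lam Lam (2 * η * ρ) (quarticBarrier (η * ρ ^ 2) 0 0 η y)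
      (Metric.ball y ρ) := by
    refine isPucciBarrier_quarticBarrier hLam le_rfl le_rfl hη₀ hball (fun x _ => by linarith)
      fun x hx => ?_
    have : 2 * η * ‖x - y‖ ≤ 2 * η * ρ := by gcongr; exact (mem_ball_iff_norm.1 hx).le
    linarith
  have hfrontier : ∀ x ∈ frontier (Metric.ball y ρ),
      quarticBarrier (η * ρ ^ 2) 0 0 η y x ≤ v x := by
    intro x hx
    have hxy : ‖x - y‖ = ρ := mem_sphere_iff_norm.1 (Metric.frontier_ball_subset_sphere hx)
    have hx₁ : ‖x‖ ≤ 1 := by linarith [norm_le_norm_add_norm_sub' x y]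
    simpa [quarticBarrier, hxy] using hv.nonneg hlam.le hLam hx₁
  have hle := hv.sub_le_comparisonConst_mul hbarrier hn hlam hLam hq Metric.isOpen_ball hball hρ
    (Metric.mem_ball_self hρ) Metric.ball_subset_closedBall hfrontier (by positivity)
    (by linarith [hC])
  have hcenter : quarticBarrier (η * ρ ^ 2) 0 0 η y y = η * ρ ^ 2 := by simp [quarticBarrier]
  have habsorb : η * ρ ^ 2 / 2 * (4 * comparisonConst n lam q K * ρ ^ (1 - n / q)) ≤
      η * ρ ^ 2 / 2 := mul_le_of_le_one_right (by positivity) hsmall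
  calc ρ ^ 2 / (4 * n * Lam) = η * ρ ^ 2 / 2 := by rw [hη]; ring
    _ ≤ v y := by linarith

end UnitBall

section Collar

variable {E : Type*} [NormedAddCommGroup E] {s R : ℝ} {x₀ x : E}

/-- The part of the collar `1 - 2s < |x| < 1` of the unit sphere within distance `R` of `x₀`. -/
def collarPatch (s R : ℝ) (x₀ : E) : Set E :=
  {x | 1 - 2 * s < ‖x‖} ∩ Metric.ball 0 1 ∩ Metric.ball x₀ R

lemma isOpen_collarPatch : IsOpen (collarPatch s R x₀) :=
  ((isOpen_lt continuous_const continuous_norm).inter Metric.isOpen_ball).inter Metric.isOpen_ball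

lemma collarPatch_subset_ball : collarPatch s R x₀ ⊆ Metric.ball 0 1 := fun _ hx => hx.1.2

lemma closure_collarPatch_subset :
    closure (collarPatch s R x₀) ⊆
      {x | 1 - 2 * s ≤ ‖x‖} ∩ Metric.closedBall 0 1 ∩ Metric.closedBall x₀ R :=
  closure_minimal
    (fun _ hx => ⟨⟨Set.mem_ofPred.2 hx.1.1.le, Metric.ball_subset_closedBall hx.1.2⟩,
      Metric.ball_subset_closedBall hx.2⟩)
    (((isClosed_le continuous_const continuous_norm).inter Metric.isClosed_closedBall).inter
      Metric.isClosed_closedBall)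

lemma norm_eq_or_of_mem_frontier_collarPatch (hx : x ∈ frontier (collarPatch s R x₀)) :
    ‖x‖ = 1 - 2 * s ∨ ‖x‖ = 1 ∨ ‖x - x₀‖ = R := by
  rw [isOpen_collarPatch.frontier_eq] at hx
  obtain ⟨⟨hinner, houter⟩, hdist⟩ := closure_collarPatch_subset hx.1
  by_contra! hne
  exact hx.2 ⟨⟨lt_of_le_of_ne' hinner hne.1,
    mem_ball_zero_iff.2 <| (mem_closedBall_zero_iff.1 houter).lt_of_ne hne.2.1⟩,
    mem_ball_iff_norm.2 <| (mem_closedBall_iff_norm.1 hdist).lt_of_ne hne.2.2⟩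

lemma one_sub_norm_sq_le (hx : 1 - 2 * s ≤ ‖x‖) : 1 - ‖x‖ ^ 2 ≤ 4 * s := by
  linarith [sq_nonneg (1 - ‖x‖)]

variable {n : ℕ} {lam Lam q m D t : ℝ} {K : ℝ≥0} {b v : EuclideanSpace ℝ (Fin n) → ℝ}
  {x₀ : EuclideanSpace ℝ (Fin n)}

lemma isPucciBarrier_collarPatch (hlam : 0 < lam) (hLam : lam ≤ Lam) (hD₀ : 0 ≤ D)
    (hD : 13 * (n * Lam) ≤ 2 * (D * lam)) (hm : 0 ≤ m) (hs : s ≤ 1 / 4) (ht : 1 ≤ t)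
    (hDts : 16 * (D * t * s) ≤ 1) (htR : t * R ≤ 1) :
    IsPucciBarrier n lam Lam (13 * m) (quarticBarrier 0 m (m * (D * t)) (m * (5 * t)) x₀)
      (collarPatch s R x₀) := by
  have hLam₀ : 0 < Lam := hlam.trans_le hLam
  have : 0 ≤ t := zero_le_one.trans ht
  have hquartic : ∀ x ∈ collarPatch s R x₀, 4 * (D * t) * (1 - ‖x‖ ^ 2) ≤ 1 := fun x hx => calc
    4 * (D * t) * (1 - ‖x‖ ^ 2) ≤ 4 * (D * t) * (4 * s) := by
      gcongr; exact one_sub_norm_sq_le hx.1.1.le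
    _ ≤ 1 := by linarith
  refine isPucciBarrier_quarticBarrier hLam hm (by positivity) (by positivity)
    collarPatch_subset_ball (fun x hx => ?_) (fun x hx => ?_)
  · have hnorm : 1 / 2 ≤ ‖x‖ := by linarith [show 1 - 2 * s < ‖x‖ from hx.1.1]
    have hconvex : (13 * (n * Lam)) * t ≤ 8 * (D * t) * (lam * ‖x‖ ^ 2) := calc
      (13 * (n * Lam)) * t ≤ 2 * (D * lam) * t := by gcongr
      _ = 8 * (D * t) * (lam * (1 / 2) ^ 2) := by ring
      _ ≤ 8 * (D * t) * (lam * ‖x‖ ^ 2) := by gcongr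
    have hconcave : (2 + 4 * (D * t) * (1 - ‖x‖ ^ 2) + 2 * (5 * t)) * (n * Lam) ≤
        13 * t * (n * Lam) := by
      gcongr
      linarith [hquartic x hx]
    have hnonneg : 0 ≤ m * (8 * (D * t) * (lam * ‖x‖ ^ 2) -
        (2 + 4 * (D * t) * (1 - ‖x‖ ^ 2) + 2 * (5 * t)) * (n * Lam)) :=
      mul_nonneg hm (by linarith)
    linarith
  · have hdist : t * ‖x - x₀‖ ≤ t * R := by gcongr; exact (mem_ball_iff_norm.1 hx.2).le
    have hslope : m * (2 + 4 * (D * t) * (1 - ‖x‖ ^ 2) + 10 * (t * ‖x - x₀‖)) ≤ m * 13 := by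
      gcongr
      linarith [hquartic x hx]
    linarith

lemma quarticBarrier_le_of_mem_frontier_collarPatch {x : EuclideanSpace ℝ (Fin n)}
    (hx : x ∈ frontier (collarPatch s R x₀)) (hD₀ : 0 ≤ D) (hm : 0 ≤ m) (hs : 0 ≤ s) (ht : 0 ≤ t)
    (hDts : 16 * (D * t * s) ≤ 1) (htR : R ^ 2 * t = s) (hv : ∀ x, ‖x‖ ≤ 1 → 0 ≤ v x)
    (hvs : ∀ x, ‖x‖ = 1 - 2 * s → m * (4 * s * (1 + 4 * (D * t * s))) ≤ v x) :
    quarticBarrier 0 m (m * (D * t)) (m * (5 * t)) x₀ x ≤ v x := by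
  obtain ⟨⟨hinner, houter⟩, -⟩ := closure_collarPatch_subset (frontier_subset_closure hx)
  rw [mem_closedBall_zero_iff] at houter
  have hsq : 0 ≤ 1 - ‖x‖ ^ 2 := sub_nonneg.2 (pow_le_one₀ (norm_nonneg x) houter)
  have hloc : 0 ≤ m * (5 * t) * ‖x - x₀‖ ^ 2 := by positivity
  have hradial : m * (1 - ‖x‖ ^ 2) + m * (D * t) * (1 - ‖x‖ ^ 2) ^ 2 ≤
      m * (4 * s * (1 + 4 * (D * t * s))) := calc
    _ ≤ m * (4 * s) + m * (D * t) * (4 * s) ^ 2 := by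
      gcongr <;> exact one_sub_norm_sq_le hinner
    _ = _ := by ring
  rw [quarticBarrier]
  rcases norm_eq_or_of_mem_frontier_collarPatch hx with h | h | h
  · linarith [hvs x h]
  · have hvx := hv x houter
    rw [h] at hradial ⊢
    linarith
  · have hbound : m * (4 * s * (1 + 4 * (D * t * s))) ≤ m * (5 * t) * ‖x - x₀‖ ^ 2 := calc
      _ ≤ m * (4 * s * (1 + 1 / 4)) := by gcongr; linarith
      _ = m * 5 * (R ^ 2 * t) := by rw [htR]; ring
      _ = m * (5 * t) * ‖x - x₀‖ ^ 2 := by rw [h]; ring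
    linarith [hv x houter]

lemma IsUnitBallSupersolution.sub_le_of_collar (hv : IsUnitBallSupersolution n lam Lam q K b v)
    (hn : n ≠ 0) (hlam : 0 < lam) (hLam : lam ≤ Lam) (hq : n < q) (hD₀ : 0 ≤ D)
    (hD : 13 * (n * Lam) ≤ 2 * (D * lam)) (hm : 0 ≤ m) (hs₀ : 0 < s) (hs : s ≤ 1 / 4)
    (ht : 1 ≤ t) (hDts : 16 * (D * t * s) ≤ 1) (hR : 0 < R) (htR : t * R ≤ 1)
    (hRts : R ^ 2 * t = s) (hsmall : comparisonConst n lam q K * R ^ (1 - n / q) ≤ 1)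
    (hvs : ∀ x, ‖x‖ = 1 - 2 * s → m * (4 * s * (1 + 4 * (D * t * s))) ≤ v x)
    (hx₀ : ‖x₀‖ = 1 - s) :
    m * (2 * s - s ^ 2) - 13 * comparisonConst n lam q K * m * (R * R ^ (1 - n / q)) ≤ v x₀ := by
  have hcenter : m * (2 * s - s ^ 2) ≤ quarticBarrier 0 m (m * (D * t)) (m * (5 * t)) x₀ x₀ := by
    have : 0 ≤ m * (D * t) * (1 - (1 - s) ^ 2) ^ 2 := by positivity
    rw [quarticBarrier, hx₀, sub_self, norm_zero]
    linarith
  have hmem : x₀ ∈ collarPatch s R x₀ :=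
    ⟨⟨by rw [Set.mem_ofPred_eq]; linarith, mem_ball_zero_iff.2 (by linarith)⟩,
      Metric.mem_ball_self hR⟩
  have hle := hv.sub_le_comparisonConst_mul
    (isPucciBarrier_collarPatch hlam hLam hD₀ hD hm hs ht hDts htR) hn hlam hLam hq
    isOpen_collarPatch collarPatch_subset_ball hR hmem
    (Set.inter_subset_right.trans Metric.ball_subset_closedBall)
    (fun x hx => quarticBarrier_le_of_mem_frontier_collarPatch hx hD₀ hm hs₀.le
      (zero_le_one.trans ht) hDts hRts (fun _ => hv.nonneg hlam.le hLam) hvs)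
    (by positivity) hsmall
  linarith

lemma exists_collar_scale {α : ℝ} (hα₀ : 0 ≤ α) (hα : α ≤ 1) (hs₀ : 0 < s) (hs : s ≤ 1) :
    ∃ R > 0, ∃ t ≥ 1, t * s = s ^ (α / 2) ∧ t * R ≤ 1 ∧ R ^ 2 * t = s ∧ R ^ α ≤ s ^ (α / 2) ∧
      R * R ^ α ≤ s * s ^ (α / 2) := by
  refine ⟨s ^ (1 - α / 4), by positivity, s ^ (α / 2 - 1),
    Real.one_le_rpow_of_pos_of_le_one_of_nonpos hs₀ hs (by linarith), ?_, ?_, ?_, ?_, ?_⟩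
  · rw [← Real.rpow_add_one hs₀.ne']
    ring_nf
  · rw [← Real.rpow_add hs₀]
    exact Real.rpow_le_one hs₀.le hs (by linarith)
  · rw [← Real.rpow_mul_natCast hs₀.le, ← Real.rpow_add hs₀]
    convert Real.rpow_one s using 2
    push_cast
    ring
  · rw [← Real.rpow_mul hs₀.le]
    exact Real.rpow_le_rpow_of_exponent_ge hs₀ hs (by nlinarith)
  · rw [← Real.rpow_mul hs₀.le, ← Real.rpow_add hs₀, ← Real.rpow_one_add' hs₀.le (by positivity)]
    exact Real.rpow_le_rpow_of_exponent_ge hs₀ hs (by nlinarith)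

lemma half_mul_one_sub_le {C y : ℝ} (hC : 0 ≤ C) (hD₀ : 0 ≤ D) (hm : 0 ≤ m) (hs : 0 ≤ s)
    (hsy : s ≤ y) :
    m * (4 * s * (1 + 4 * (D * y))) / 2 * (1 - (1 + 7 * C + 4 * D) * y) ≤
      m * (2 * s - s ^ 2) - 13 * C * m * (s * y) := by
  have hy : 0 ≤ y := hs.trans hsy
  have hcross : 0 ≤ D * y * (1 + 7 * C) * y + 4 * (D * y) ^ 2 := by positivity
  have herror : s + 13 * C * y ≤ 2 * (1 + 7 * C) * y := by linarith [mul_nonneg hC hy]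
  calc m * (4 * s * (1 + 4 * (D * y))) / 2 * (1 - (1 + 7 * C + 4 * D) * y)
      = 2 * m * s * (1 - (1 + 7 * C) * y - 4 * (D * y * (1 + 7 * C) * y + 4 * (D * y) ^ 2)) := by
        ring
    _ ≤ 2 * m * s * (1 - (1 + 7 * C) * y) :=
        mul_le_mul_of_nonneg_left (by linarith) (by positivity)
    _ = m * s * (2 - 2 * (1 + 7 * C) * y) := by ring
    _ ≤ m * s * (2 - (s + 13 * C * y)) := by gcongr
    _ = m * (2 * s - s ^ 2) - 13 * C * m * (s * y) := by ring

lemma one_sub_div_pos (hq : n < q) : 0 < 1 - n / q :=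
  sub_pos.2 <| (div_lt_one (n.cast_nonneg.trans_lt hq)).2 hq

lemma IsUnitBallSupersolution.half_mul_le_of_le_on_sphere {M : ℝ} {x : EuclideanSpace ℝ (Fin n)}
    (hv : IsUnitBallSupersolution n lam Lam q K b v) (hn : n ≠ 0) (hlam : 0 < lam)
    (hLam : lam ≤ Lam) (hq : n < q) (hD₀ : 0 ≤ D) (hD : 13 * (n * Lam) ≤ 2 * (D * lam))
    (hs₀ : 0 < s) (hs : s ≤ 1 / 4) (hDs : 16 * D * s ^ ((1 - n / q) / 2) ≤ 1)
    (hCs : comparisonConst n lam q K * s ^ ((1 - n / q) / 2) ≤ 1) (hM : 0 ≤ M)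
    (hvM : ∀ x, ‖x‖ = 1 - 2 * s → M ≤ v x) (hx : ‖x‖ = 1 - s) :
    M / 2 * (1 - (1 + 7 * comparisonConst n lam q K + 4 * D) * s ^ ((1 - n / q) / 2)) ≤ v x := by
  have hC : 0 ≤ comparisonConst n lam q K := comparisonConst_nonneg hlam
  have hα : 1 - n / q ≤ 1 := sub_le_self 1 (div_nonneg n.cast_nonneg (n.cast_nonneg.trans hq.le))
  obtain ⟨R, hR, t, ht, hts, htR, hRts, hRα, hRRα⟩ :=
    exists_collar_scale (one_sub_div_pos hq).le hα hs₀ (by linarith)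
  set y : ℝ := s ^ ((1 - n / q) / 2)
  have hDts : D * t * s = D * y := by rw [mul_assoc, hts]
  have hsy : s ≤ y := hts ▸ le_mul_of_one_le_left hs₀.le ht
  set m : ℝ := M / (4 * s * (1 + 4 * (D * y)))
  have hm₀ : 0 ≤ m := by positivity
  have hmM : m * (4 * s * (1 + 4 * (D * y))) = M := div_mul_cancel₀ M (by positivity)
  have hcollar := hv.sub_le_of_collar hn hlam hLam hq hD₀ hD hm₀ hs₀ hs ht
    (by rwa [hDts, ← mul_assoc]) hR htR hRts (hCs.trans' (by gcongr)) (by rwa [hDts, hmM]) hx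
  calc M / 2 * (1 - (1 + 7 * comparisonConst n lam q K + 4 * D) * y)
      ≤ m * (2 * s - s ^ 2) - 13 * comparisonConst n lam q K * m * (s * y) :=
        hmM ▸ half_mul_one_sub_le hC hD₀ hm₀ hs₀.le hsy
    _ ≤ m * (2 * s - s ^ 2) - 13 * comparisonConst n lam q K * m * (R * R ^ (1 - n / q)) := by
        gcongr
    _ ≤ v x := hcollar

lemma eventually_mul_rpow_le {g ε : ℝ} (D : ℝ) (hg : 0 < g) (hε : 0 < ε) :
    ∀ᶠ s in 𝓝[>] (0 : ℝ), D * s ^ g ≤ ε := by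
  have hlim : Tendsto (fun s : ℝ => D * s ^ g) (𝓝 0) (𝓝 0) := by
    simpa [hg.ne'] using (Real.continuousAt_rpow_const 0 g (Or.inr hg.le)).tendsto.const_mul D
  exact (hlim.mono_left nhdsWithin_le_nhds).eventually_le_const hε

lemma exists_eventually_half_mul_le_of_le_on_sphere (K : ℝ≥0) (hn : n ≠ 0) (hlam : 0 < lam)
    (hLam : lam ≤ Lam) (hq : n < q) :
    ∃ C, 0 ≤ C ∧ ∀ᶠ s in 𝓝[>] (0 : ℝ), ∀ b v : EuclideanSpace ℝ (Fin n) → ℝ,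
      IsUnitBallSupersolution n lam Lam q K b v → ∀ M, 0 ≤ M →
      (∀ x, ‖x‖ = 1 - 2 * s → M ≤ v x) →
      ∀ x, ‖x‖ = 1 - s → M / 2 * (1 - C * s ^ ((1 - n / q) / 2)) ≤ v x := by
  have hα : 0 < (1 - n / q) / 2 := half_pos (one_sub_div_pos hq)
  have hC : 0 ≤ comparisonConst n lam q K := comparisonConst_nonneg hlam
  set D : ℝ := 13 * (n * Lam) / (2 * lam) with hDdef
  have hLam₀ : 0 < Lam := hlam.trans_le hLam
  have hD₀ : 0 ≤ D := by positivity
  have hD : 13 * (n * Lam) = 2 * (D * lam) := by rw [hDdef]; field_simp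
  refine ⟨1 + 7 * comparisonConst n lam q K + 4 * D, by positivity, ?_⟩
  filter_upwards [Ioc_mem_nhdsGT (by norm_num : (0 : ℝ) < 1 / 4),
    eventually_mul_rpow_le (16 * D) hα one_pos,
    eventually_mul_rpow_le (comparisonConst n lam q K) hα one_pos]
    with s hs hDs hCs b v hv M hM hvM x hx
  exact hv.half_mul_le_of_le_on_sphere hn hlam hLam hq hD₀ hD.le hs.1 hs.2 hDs hCs hM hvM hx

end Collar

section DyadicIteration

@[elab_as_elim]
lemma dyadic_induction {Q : ℝ → Prop} {r s : ℝ} (base : ∀ s, r / 2 < s → s ≤ r → Q s)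
    (step : ∀ s, 0 < s → s ≤ r / 2 → Q (2 * s) → Q s) (hs₀ : 0 < s) (hs : s ≤ r) : Q s := by
  obtain ⟨k, hk⟩ := pow_unbounded_of_one_lt (r / 2 / s) (one_lt_two : (1 : ℝ) < 2)
  rw [div_lt_iff₀ hs₀] at hk
  induction k generalizing s with
  | zero => exact base s (by simpa using hk) hs
  | succ k ih =>
    rcases lt_or_ge (r / 2) s with h | h
    · exact base s h hs
    · exact step s hs₀ h (ih (by positivity) (by linarith) (by rwa [← mul_assoc, ← pow_succ]))

lemma mul_one_add_mul_rpow_le {C P g s : ℝ} (hC : 0 ≤ C) (hP : 2 * C = P * (2 ^ g - 1))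
    (hs : 0 < s) (hPs : P * (2 * s) ^ g ≤ 1) :
    s * (1 + P * s ^ g) ≤ 2 * s * (1 + P * (2 * s) ^ g) / 2 * (1 - C * s ^ g) := by
  have herror : C * s ^ g * (P * (2 * s) ^ g) ≤ C * s ^ g :=
    mul_le_of_le_one_right (by positivity) hPs
  have hgain : P * (2 * s) ^ g = P * s ^ g + 2 * C * s ^ g := by
    rw [hP, Real.mul_rpow zero_le_two hs.le]
    ring
  calc s * (1 + P * s ^ g)
      ≤ s * (1 + P * (2 * s) ^ g - C * s ^ g - C * s ^ g * (P * (2 * s) ^ g)) := by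
        gcongr
        linarith
    _ = 2 * s * (1 + P * (2 * s) ^ g) / 2 * (1 - C * s ^ g) := by ring

lemma mul_one_sub_norm_le_of_halving {E : Type*} [NormedAddCommGroup E] {v : E → ℝ}
    {c r g C P : ℝ} (hc : 0 ≤ c) (hr : r ≤ 1 / 2) (hC : 0 ≤ C) (hP₀ : 0 ≤ P)
    (hP : 2 * C = P * (2 ^ g - 1)) (hPs : ∀ s, 0 < s → s ≤ r → P * s ^ g ≤ 1)
    (hinterior : ∀ x, r / 2 < 1 - ‖x‖ → c ≤ v x)
    (hhalf : ∀ s, 0 < s → s ≤ r → ∀ M, 0 ≤ M → (∀ x, ‖x‖ = 1 - 2 * s → M ≤ v x) →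
      ∀ x, ‖x‖ = 1 - s → M / 2 * (1 - C * s ^ g) ≤ v x) {x : E} (hx : ‖x‖ < 1) :
    c * (1 - ‖x‖) ≤ v x := by
  have hprofile : ∀ s, 0 < s → s ≤ r → ∀ x, ‖x‖ = 1 - s → c * (s * (1 + P * s ^ g)) ≤ v x := by
    intro s hs₀ hsr
    refine dyadic_induction (fun s hs hsr x hx => ?_) (fun s hs₀ hsr ih x hx => ?_) hs₀ hsr
    · have hs₀ : 0 < s := by linarith
      calc c * (s * (1 + P * s ^ g)) ≤ c * (1 / 2 * (1 + 1)) := by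
            gcongr
            · exact hsr.trans hr
            · exact hPs s hs₀ hsr
        _ = c := by ring
        _ ≤ v x := hinterior x (by linarith)
    · calc c * (s * (1 + P * s ^ g))
          ≤ c * (2 * s * (1 + P * (2 * s) ^ g) / 2 * (1 - C * s ^ g)) := by
            refine mul_le_mul_of_nonneg_left (mul_one_add_mul_rpow_le hC hP hs₀ ?_) hc
            exact hPs _ (by positivity) (by linarith)
        _ = c * (2 * s * (1 + P * (2 * s) ^ g)) / 2 * (1 - C * s ^ g) := by ring
        _ ≤ v x := hhalf s hs₀ (by linarith) _ (by positivity) ih x hx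
  rcases le_total (1 - ‖x‖) r with h | h
  · have hdist : 0 < 1 - ‖x‖ := sub_pos.2 hx
    refine (hprofile _ hdist h x (by ring)).trans' ?_
    gcongr
    exact le_mul_of_one_le_right hdist.le (le_add_of_nonneg_right (by positivity))
  · refine (hinterior x (by linarith)).trans' ?_
    exact mul_le_of_le_one_right hc (sub_le_self 1 (norm_nonneg x))

end DyadicIteration

theorem barrier_lemma_unit_ball_general {n : ℕ} {lam Lam q : ℝ} (K : ℝ≥0) (hn : n ≠ 0)
    (hlam : 0 < lam) (hLam : lam ≤ Lam) (hq : n < q) :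
    ∃ c₀ : ℝ, 0 < c₀ ∧ ∀ b v, IsUnitBallSupersolution n lam Lam q K b v →
      ∀ x ∈ Metric.ball (0 : EuclideanSpace ℝ (Fin n)) 1, c₀ * (1 - ‖x‖) ≤ v x := by
  have hα : 0 < 1 - n / q := one_sub_div_pos hq
  have hLam₀ : 0 < Lam := hlam.trans_le hLam
  obtain ⟨C, hC, hhalf⟩ := exists_eventually_half_mul_le_of_le_on_sphere K hn hlam hLam hq
  set g : ℝ := (1 - n / q) / 2
  have hg : 0 < (2 : ℝ) ^ g - 1 := sub_pos.2 (Real.one_lt_rpow one_lt_two (half_pos hα))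
  set P : ℝ := 2 * C / (2 ^ g - 1)
  obtain ⟨r, hr₀, hr⟩ := mem_nhdsGT_iff_exists_Ioc_subset.1 <|
    ((hhalf.and (eventually_mul_rpow_le P (half_pos hα) one_pos)).and
      (eventually_mul_rpow_le (4 * comparisonConst n lam q K) hα one_pos)).and
      (Ioc_mem_nhdsGT (by norm_num : (0 : ℝ) < 1 / 2))
  have hr₀ : 0 < r := hr₀
  refine ⟨(r / 2) ^ 2 / (4 * n * Lam), by positivity, fun b v hv x hx => ?_⟩
  exact mul_one_sub_norm_le_of_halving (by positivity) (hr ⟨hr₀, le_rfl⟩).2.2 hC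
    (div_nonneg (by positivity) hg.le) (div_mul_cancel₀ _ hg.ne').symm
    (fun s hs₀ hs => (hr ⟨hs₀, hs⟩).1.1.2)
    (fun y hy => hv.sq_le_of_norm_add_le hn hlam hLam hq (half_pos hr₀)
      (hr ⟨half_pos hr₀, half_le_self hr₀.le⟩).1.2 (by linarith))
    (fun s hs₀ hs => (hr ⟨hs₀, hs⟩).1.1.1 b v hv) (mem_ball_zero_iff.1 hx)

/-- Barrier lemma in the unit ball. -/
theorem barrier_lemma_unit_ball
    (n : ℕ) (hn : 2 ≤ n) (lam Lam : ℝ) (hlam : 0 < lam) (hLam : lam ≤ Lam)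
    (q K : ℝ) (hq : (n : ℝ) < q) (hK : 0 < K) :
    ∃ c₀ : ℝ, 0 < c₀ ∧
      ∀ b v : EuclideanSpace ℝ (Fin n) → ℝ,
        ContinuousOn b (Metric.ball 0 1) →
        (∀ x ∈ Metric.ball (0 : EuclideanSpace ℝ (Fin n)) 1, 0 ≤ b x) →
        LpNormE n q b (Metric.ball 0 1) ≤ ENNReal.ofReal K →
        ContinuousOn v (Metric.closedBall 0 1) →
        ContDiffOn ℝ 2 v (Metric.ball 0 1) →
        (∀ x ∈ Metric.ball (0 : EuclideanSpace ℝ (Fin n)) 1,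
          pucciMinus n lam Lam (hess n v x) - b x * gradNorm n v x = -1) →
        (∀ x ∈ Metric.sphere (0 : EuclideanSpace ℝ (Fin n)) 1, v x = 0) →
        ∀ x ∈ Metric.ball (0 : EuclideanSpace ℝ (Fin n)) 1, c₀ * (1 - ‖x‖) ≤ v x := by
  obtain ⟨c₀, hc₀, h⟩ := barrier_lemma_unit_ball_general K.toNNReal (by omega) hlam hLam hq
  exact ⟨c₀, hc₀, fun b v hb _ hbK hvc hv heq hsphere => h b v
    ⟨⟨hv, fun x hx => (heq x hx).le⟩, hb.aestronglyMeasurable measurableSet_ball, hbK, hvc,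
      fun x hx => (hsphere x hx).ge⟩⟩
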